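/- Let Ω ⊂ ℝⁿ be a bounded domain and let u ∈ C⁴(Ω) ∩ C²(Ω̄) be a k-convex solution of S_k(D²u) = 1 in Ω. Then the supremum of Δu over Ω̄ is attained on the boundary: sup_{Ω̄} Δu = sup_{∂Ω} Δu. -/

import Mathlib

open scoped Classical Topology
open Real Filter MeasureTheory

noncomputable section

/-- Euclidean space ℝⁿ. -/
abbrev Euc (n : ℕ) : Type := EuclideanSpace ℝ (Fin n)

/-- The standard basis vector `e i`. -/
def ebasis (n : ℕ) (i : Fin n) : Euc n := EuclideanSpace.single i 1

/-- The Hessian matrix `D²u(x)`. -/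
def hessMat (n : ℕ) (u : Euc n → ℝ) (x : Euc n) : Matrix (Fin n) (Fin n) ℝ :=
  Matrix.of fun i j => iteratedFDeriv ℝ 2 u x ![ebasis n i, ebasis n j]

/-- The Laplacian `Δu(x)` (trace of the Hessian). -/
def lapl (n : ℕ) (u : Euc n → ℝ) (x : Euc n) : ℝ := ∑ i, hessMat n u x i i

/-- The `k`-th elementary symmetric function of the eigenvalues of an `n × n` matrix,
expressed through the coefficients of the characteristic polynomial. -/
def matSk (n k : ℕ) (M : Matrix (Fin n) (Fin n) ℝ) : ℝ :=
  (-1 : ℝ) ^ k * (Matrix.charpoly M).coeff (n - k)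

/-- `S_k(D²u)(x)`. -/
def SkHess (n k : ℕ) (u : Euc n → ℝ) (x : Euc n) : ℝ := matSk n k (hessMat n u x)

/-- `u` is `k`-convex on `U`: the eigenvalues of the Hessian lie in the Gårding cone `Γ_k`. -/
def KConvexOn (n k : ℕ) (u : Euc n → ℝ) (U : Set (Euc n)) : Prop :=
  ∀ x ∈ U, ∀ j : ℕ, 1 ≤ j → j ≤ k → 0 < matSk n j (hessMat n u x)

/-- Membership in the class `𝒜_k`: symmetric positive definite with `S_k(λ(A)) = 1`. -/
def MemA (n k : ℕ) (A : Matrix (Fin n) (Fin n) ℝ) : Prop :=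
  A.IsSymm ∧ A.PosDef ∧ matSk n k A = 1

/-- The quadratic form `½ xᵀ A x`. -/
def quadA (n : ℕ) (A : Matrix (Fin n) (Fin n) ℝ) (x : Euc n) : ℝ :=
  (1 / 2) * ∑ i, ∑ j, x i * A i j * x j

/-- The linear form `b ⋅ x`. -/
def linB (n : ℕ) (b x : Euc n) : ℝ := ∑ i, b i * x i

/-- `λ_max(A) < c`, expressed through the quadratic form (for symmetric `A`). -/
def lambdaMaxLT (n : ℕ) (A : Matrix (Fin n) (Fin n) ℝ) (c : ℝ) : Prop :=
  ∀ x : Euc n, x ≠ 0 → ∑ i, ∑ j, x i * A i j * x j < c * ‖x‖ ^ 2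

/-- `u` is smooth on an open neighbourhood of the (closed) set `S`;
this is our rendering of `u ∈ C^∞(S)` for a closed set `S`. -/
def SmoothOnNhd (n : ℕ) (u : Euc n → ℝ) (S : Set (Euc n)) : Prop :=
  ∃ U : Set (Euc n), IsOpen U ∧ S ⊆ U ∧ ContDiffOn ℝ (⊤ : ℕ∞) u U

/-- A smooth bounded strictly convex domain in ℝⁿ. -/
def SmoothStrictConvexDomain (n : ℕ) (Ω : Set (Euc n)) : Prop :=
  IsOpen Ω ∧ Bornology.IsBounded Ω ∧ Ω.Nonempty ∧ Convex ℝ Ω ∧ StrictConvex ℝ Ω ∧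
    ∃ f : Euc n → ℝ, ContDiff ℝ (⊤ : ℕ∞) f ∧ Ω = {x | f x < 0} ∧
      ∀ x ∈ frontier Ω, fderiv ℝ f x ≠ 0

/-- Extension of `u` by the constant value `v` inside `Ω`. -/
def extBy (n : ℕ) (Ω : Set (Euc n)) (v : ℝ) (u : Euc n → ℝ) : Euc n → ℝ :=
  fun x => if x ∈ Ω then v else u x

/-- `u` (vanishing on `∂Ω`) is quasiconvex: all sublevel sets of its zero-extension are convex. -/
def QuasiconvexSol (n : ℕ) (Ω : Set (Euc n)) (u : Euc n → ℝ) : Prop :=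
  ∀ t : ℝ, Convex ℝ {x : Euc n | extBy n Ω 0 u x ≤ t}

/-- The `k`-th elementary symmetric polynomial of a vector `a ∈ ℝⁿ`. -/
def esymmVec (n k : ℕ) (a : Fin n → ℝ) : ℝ :=
  ∑ s ∈ Finset.powersetCard k (Finset.univ : Finset (Fin n)), ∏ i ∈ s, a i

/-- `h_k(a) = max_i S_{k-1}(a)|_{a_i = 0} · a_i`. -/
def hkfun (n k : ℕ) (a : Fin n → ℝ) : ℝ :=
  ⨆ i : Fin n, esymmVec n (k - 1) (Function.update a i 0) * a i

/-- The exponent `-k / (2 h_k(a))`. -/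
def genExp (n k : ℕ) (a : Fin n → ℝ) : ℝ := -(k : ℝ) / (2 * hkfun n k a)

/-- The integrand `(1 + α t^{-k/(2h_k(a))})^{1/k}`. -/
def genInt (n k : ℕ) (a : Fin n → ℝ) (α t : ℝ) : ℝ :=
  (1 + α * t ^ genExp n k a) ^ ((1 : ℝ) / (k : ℝ))

/-- The generalized symmetric function `ū`. -/
def ubar (n k : ℕ) (a : Fin n → ℝ) (R₀ α : ℝ) (x : Euc n) : ℝ :=
  ∫ t in R₀..(quadA n (Matrix.diagonal a) x), genInt n k a α t

/-- `μ(α) = ∫_{R₀}^∞ ((1 + α t^{-k/(2h_k(a))})^{1/k} - 1) dt - R₀`. -/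
def muA (n k : ℕ) (a : Fin n → ℝ) (R₀ α : ℝ) : ℝ :=
  (∫ t in Set.Ioi R₀, (genInt n k a α t - 1)) - R₀

/-- The ellipsoid `E_R(xb) = {x : ½ (x - xb)ᵀ A (x - xb) < R}`. -/
def ESet (n : ℕ) (A : Matrix (Fin n) (Fin n) ℝ) (xb : Euc n) (R : ℝ) : Set (Euc n) :=
  {x : Euc n | quadA n A (x - xb) < R}

/-- The non-concentric convex ring `Ω_R^ε = E_R(0) ∖ B̄_ε(x₀)`. -/
def OmegaRe (n : ℕ) (a : Fin n → ℝ) (x₀ : Euc n) (ε R : ℝ) : Set (Euc n) :=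
  ESet n (Matrix.diagonal a) 0 R \ closure (Metric.ball x₀ ε)

/-- `u` is a `k`-convex solution of the approximating problem
`S_k(D²u) = 1` in `Ω_R^ε`, `u = 0` on `∂B_ε(x₀)`, `u = ū` on `∂E_R(0)`. -/
def ApproxSol (n k : ℕ) (a : Fin n → ℝ) (x₀ : Euc n) (ε R R₀ α : ℝ)
    (u : Euc n → ℝ) : Prop :=
  SmoothOnNhd n u (closure (OmegaRe n a x₀ ε R)) ∧
  KConvexOn n k u (OmegaRe n a x₀ ε R) ∧
  (∀ x ∈ OmegaRe n a x₀ ε R, SkHess n k u x = 1) ∧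
  (∀ x ∈ Metric.sphere x₀ ε, u x = 0) ∧
  (∀ x : Euc n, quadA n (Matrix.diagonal a) x = R → u x = ubar n k a R₀ α x)

/-- The constant `C_ε` of the boundary gradient estimate. -/
def Ceps (n k : ℕ) (C ε : ℝ) : ℝ :=
  if 2 * k < n then C * ((n : ℝ) / (k : ℝ) - 2) * ε⁻¹
  else if 2 * k = n then C * ε⁻¹ * |Real.log ε|⁻¹
  else C * (2 - (n : ℝ) / (k : ℝ)) * ε ^ (1 - (n : ℝ) / (k : ℝ))

/-- `u` is a `k`-convex solution of the exterior Dirichlet problem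
`S_k(D²u) = 1` in `ℝⁿ ∖ B̄_ε(x₀)`, `u = 0` on `∂B_ε(x₀)`, with quadratic asymptotics
`½ xᵀAx + c` at infinity (`A = diag a`). -/
def ExtBallSol (n k : ℕ) (a : Fin n → ℝ) (x₀ : Euc n) (ε c : ℝ) (u : Euc n → ℝ) : Prop :=
  SmoothOnNhd n u (Metric.ball x₀ ε)ᶜ ∧
  KConvexOn n k u (closure (Metric.ball x₀ ε))ᶜ ∧
  (∀ x ∈ (closure (Metric.ball x₀ ε))ᶜ, SkHess n k u x = 1) ∧
  (∀ x ∈ Metric.sphere x₀ ε, u x = 0) ∧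
  Tendsto (fun x : Euc n => u x - (quadA n (Matrix.diagonal a) x + c))
    (cocompact (Euc n)) (𝓝 0)

/-- `u` is a `k`-convex solution of the exterior Dirichlet problem on `ℝⁿ ∖ Ω₀` with
asymptotics `½ xᵀAx + b·x + c` at infinity. -/
def ExtDomSol (n k : ℕ) (Ω₀ : Set (Euc n)) (A : Matrix (Fin n) (Fin n) ℝ) (b : Euc n)
    (c : ℝ) (u : Euc n → ℝ) : Prop :=
  SmoothOnNhd n u Ω₀ᶜ ∧
  KConvexOn n k u (closure Ω₀)ᶜ ∧
  (∀ x ∈ (closure Ω₀)ᶜ, SkHess n k u x = 1) ∧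
  (∀ x ∈ frontier Ω₀, u x = 0) ∧
  Tendsto (fun x : Euc n => u x - (quadA n A x + linB n b x + c))
    (cocompact (Euc n)) (𝓝 0)

/-- `u` is a solution of the exterior Dirichlet problem for the Laplace equation
`Δu = 1` on `ℝⁿ ∖ Ω₀` with asymptotics `½ xᵀAx + b·x + c` at infinity. -/
def ExtDomSolLap (n : ℕ) (Ω₀ : Set (Euc n)) (A : Matrix (Fin n) (Fin n) ℝ) (b : Euc n)
    (c : ℝ) (u : Euc n → ℝ) : Prop :=
  SmoothOnNhd n u Ω₀ᶜ ∧
  (∀ x ∈ (closure Ω₀)ᶜ, lapl n u x = 1) ∧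
  (∀ x ∈ frontier Ω₀, u x = 0) ∧
  Tendsto (fun x : Euc n => u x - (quadA n A x + linB n b x + c))
    (cocompact (Euc n)) (𝓝 0)

/-- `u` solves the exterior problem `Δu = 0` in `ℝⁿ ∖ Ω̄`, `u = 1` on `∂Ω`,
`u → 0` at infinity. -/
def HarmExtSol (n : ℕ) (Ω : Set (Euc n)) (u : Euc n → ℝ) : Prop :=
  SmoothOnNhd n u Ωᶜ ∧
  (∀ x ∈ (closure Ω)ᶜ, lapl n u x = 0) ∧
  (∀ x ∈ frontier Ω, u x = 1) ∧
  Tendsto u (cocompact (Euc n)) (𝓝 0)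

end

section VectorPart

set_option linter.unusedSectionVars false

/-- elementary symmetric function of `a` over the finite index set `s` -/
def esf {ι : Type*} (s : Finset ι) (j : ℕ) (a : ι → ℝ) : ℝ :=
  ∑ t ∈ s.powersetCard j, ∏ i ∈ t, a i

/-- Gårding cone over the index set `s` -/
def Gam {ι : Type*} (s : Finset ι) (k : ℕ) (a : ι → ℝ) : Prop :=
  ∀ j, j ≤ k → 0 < esf s j a

theorem Polynomial_splits_derivative {p : Polynomial ℝ} (hp : p.Splits) :
    (Polynomial.derivative p).Splits := by
  by_cases h0 : p.natDegree = 0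
  · exact Polynomial.Splits.of_natDegree_eq_zero
      (by have := Polynomial.natDegree_derivative_le p; omega)
  · rw [Polynomial.splits_iff_card_roots] at *
    have h1 := Polynomial.card_roots_le_derivative p
    have h2 := Polynomial.natDegree_derivative_le p
    have h3 := Polynomial.card_roots' (Polynomial.derivative p)
    omega

theorem splits_iterate_derivative {p : Polynomial ℝ} (hp : p.Splits) (m : ℕ) :
    (Polynomial.derivative^[m] p).Splits := by
  induction m with
  | zero => simpa using hp
  | succ m ih => rw [Function.iterate_succ_apply']; exact Polynomial_splits_derivative ih

theorem laguerre_aux (c : ℝ) (m : Multiset ℝ) (x : ℝ) :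
    let p : Polynomial ℝ := Polynomial.C c * (m.map (fun a => Polynomial.X - Polynomial.C a)).prod
    p.eval x * (Polynomial.derivative (Polynomial.derivative p)).eval x
      ≤ ((Polynomial.derivative p).eval x) ^ 2 := by
  induction m using Multiset.induction_on with
  | empty => simp
  | cons a m ih =>
    simp only at ih ⊢
    set R : Polynomial ℝ := Polynomial.C c * (m.map (fun a => Polynomial.X - Polynomial.C a)).prod
    have : Polynomial.C c * ((a ::ₘ m).map (fun a => Polynomial.X - Polynomial.C a)).prod
        = (Polynomial.X - Polynomial.C a) * R := by
      simp [R]; ring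
    rw [this]
    simp only [Polynomial.derivative_mul, Polynomial.derivative_sub, Polynomial.derivative_X,
      Polynomial.derivative_C, Polynomial.derivative_add, Polynomial.eval_mul, Polynomial.eval_add,
      Polynomial.eval_sub, Polynomial.eval_X, Polynomial.eval_C, sub_zero, one_mul]
    nlinarith [mul_nonneg (sq_nonneg (x - a)) (sub_nonneg.2 ih), sq_nonneg (R.eval x)]

theorem laguerre {p : Polynomial ℝ} (hp : p.Splits) (x : ℝ) :
    p.eval x * (Polynomial.derivative (Polynomial.derivative p)).eval x
      ≤ ((Polynomial.derivative p).eval x) ^ 2 := by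
  have := laguerre_aux p.leadingCoeff p.roots x
  simp only [← hp.eq_prod_roots] at this
  exact this

theorem newton_coeff {p : Polynomial ℝ} (hp : p.Splits) (m : ℕ) :
    p.coeff m * p.coeff (m + 2) ≤ p.coeff (m + 1) ^ 2 := by
  have h := laguerre (splits_iterate_derivative hp m) 0
  rw [← Function.iterate_succ_apply' Polynomial.derivative,
    ← Function.iterate_succ_apply' Polynomial.derivative,
    ← Polynomial.coeff_zero_eq_eval_zero, ← Polynomial.coeff_zero_eq_eval_zero,
    ← Polynomial.coeff_zero_eq_eval_zero] at h
  simp only [Polynomial.coeff_iterate_derivative, zero_add, Nat.descFactorial_self,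
    Nat.succ_eq_add_one, nsmul_eq_mul, Nat.factorial_succ] at h
  push_cast at h
  have hf : (0:ℝ) < (m.factorial : ℝ) := by exact_mod_cast m.factorial_pos
  set f : ℝ := (m.factorial : ℝ)
  have h2 : ((m:ℝ) + 1 + 1) * (p.coeff m * p.coeff (m + 2)) ≤ (m + 1) * p.coeff (m + 1) ^ 2 := by
    have : (f ^ 2 * (m + 1)) * (((m:ℝ) + 1 + 1) * (p.coeff m * p.coeff (m + 2)))
        ≤ (f ^ 2 * (m + 1)) * ((m + 1) * p.coeff (m + 1) ^ 2) := by
      have e : m + 1 + 1 = m + 2 := rfl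
      simp only [e] at h
      nlinarith [h]
    exact le_of_mul_le_mul_left this (by positivity)
  have hm : (0:ℝ) ≤ m := by positivity
  by_cases hs : 0 ≤ p.coeff m * p.coeff (m + 2)
  · nlinarith
  · nlinarith [sq_nonneg (p.coeff (m + 1))]

variable {ι : Type*}

theorem esf_zero (s : Finset ι) (a : ι → ℝ) : esf s 0 a = 1 := by simp [esf]

theorem newton_esf (s : Finset ι) (a : ι → ℝ) (j : ℕ) :
    esf s j a * esf s (j + 2) a ≤ esf s (j + 1) a ^ 2 := by
  by_cases hc : j + 2 ≤ s.card
  · have hp : (∏ i ∈ s, (Polynomial.X + Polynomial.C (a i))).Splits :=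
      Polynomial.Splits.prod fun i _ => Polynomial.Splits.X_add_C _
    have h := newton_coeff hp (s.card - (j + 2))
    rw [Finset.prod_X_add_C_coeff _ _ (by omega), Finset.prod_X_add_C_coeff _ _ (by omega),
      Finset.prod_X_add_C_coeff _ _ (by omega)] at h
    have e0 : s.card - (s.card - (j + 2)) = j + 2 := by omega
    have e1 : s.card - (s.card - (j + 2) + 1) = j + 1 := by omega
    have e2 : s.card - (s.card - (j + 2) + 2) = j := by omega
    rw [e0, e1, e2] at h
    unfold esf
    linarith
  · have : esf s (j + 2) a = 0 := by
      unfold esf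
      rw [Finset.powersetCard_eq_empty.2 (by omega)]; simp
    rw [this]; nlinarith [sq_nonneg (esf s (j + 1) a)]

variable [DecidableEq ι]

theorem esf_insert {s : Finset ι} {i : ι} (hi : i ∉ s) (a : ι → ℝ) (j : ℕ) :
    esf (insert i s) (j + 1) a = esf s (j + 1) a + a i * esf s j a := by
  unfold esf
  rw [Finset.powersetCard_succ_insert hi, Finset.sum_union, Finset.sum_image, Finset.mul_sum]
  · congr 1
    refine Finset.sum_congr rfl fun t ht => ?_
    rw [Finset.prod_insert]
    exact fun h => hi ((Finset.mem_powersetCard.1 ht).1 h)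
  · intro t ht t' ht' h
    have h1 : i ∉ t := fun h => hi ((Finset.mem_powersetCard.1 ht).1 h)
    have h2 : i ∉ t' := fun h => hi ((Finset.mem_powersetCard.1 ht').1 h)
    have h : insert i t = insert i t' := h
    rw [← Finset.erase_insert h1, h, Finset.erase_insert h2]
  · rw [Finset.disjoint_left]
    intro t ht ht'
    obtain ⟨t', _, rfl⟩ := Finset.mem_image.1 ht'
    exact hi ((Finset.mem_powersetCard.1 ht).1 (Finset.mem_insert_self _ _))

theorem esf_erase {s : Finset ι} {i : ι} (hi : i ∈ s) (a : ι → ℝ) (j : ℕ) :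
    esf s (j + 1) a = esf (s.erase i) (j + 1) a + a i * esf (s.erase i) j a := by
  conv_lhs => rw [← Finset.insert_erase hi]
  exact esf_insert (Finset.notMem_erase i s) a j

theorem esf_euler (s : Finset ι) (a : ι → ℝ) (j : ℕ) :
    ∑ i ∈ s, a i * esf (s.erase i) j a = (j + 1) * esf s (j + 1) a := by
  induction s using Finset.induction_on generalizing j with
  | empty =>
    have : esf (∅ : Finset ι) (j + 1) a = 0 := by
      unfold esf
      rw [Finset.powersetCard_eq_empty.2 (by simp)]; simp
    rw [this]; simp
  | insert i s hi ih =>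
    rw [Finset.sum_insert hi, Finset.erase_insert hi, esf_insert hi]
    cases j with
    | zero =>
      have h := ih 0
      simp only [esf_zero] at h ⊢
      simp at h ⊢; linarith
    | succ j =>
      have : ∀ l ∈ s, a l * esf ((insert i s).erase l) (j + 1) a =
          a l * esf (s.erase l) (j + 1) a + a i * (a l * esf (s.erase l) j a) := by
        intro l hl
        have hne : i ≠ l := fun h => hi (h ▸ hl)
        rw [Finset.erase_insert_of_ne hne, esf_insert (fun h => hi (Finset.mem_of_mem_erase h))]
        ring
      rw [Finset.sum_congr rfl this, Finset.sum_add_distrib, ← Finset.mul_sum, ih, ih]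
      push_cast; ring

theorem Gam.mono {s : Finset ι} {k l : ℕ} {a : ι → ℝ} (h : Gam s k a) (hl : l ≤ k) : Gam s l a :=
  fun j hj => h j (hj.trans hl)

theorem Gam.erase {s : Finset ι} {k : ℕ} {a : ι → ℝ} (h : Gam s (k + 1) a) {i : ι} (hi : i ∈ s) :
    Gam (s.erase i) k a := by
  induction k with
  | zero => intro j hj; obtain rfl : j = 0 := by omega
            rw [esf_zero]; exact one_pos
  | succ k ih =>
    have ih := ih (h.mono (by omega))
    intro j hj
    rcases Nat.lt_or_ge j (k + 1) with hj' | hj'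
    · exact ih j (by omega)
    · obtain rfl : j = k + 1 := by omega
      by_contra hneg
      push Not at hneg
      have h0 := ih k le_rfl
      have h1 := h (k + 1) (by omega)
      have h2 := h (k + 2) (by omega)
      rw [esf_erase hi] at h1 h2
      have hN := newton_esf (s.erase i) a k
      set p := esf (s.erase i) k a
      set q := esf (s.erase i) (k + 1) a
      set r := esf (s.erase i) (k + 2) a
      have h2' : 0 < r + a i * q := h2
      have e1 : 0 < p * (r + a i * q) := mul_pos h0 h2'
      nlinarith [mul_nonneg (neg_nonneg.2 hneg) h1.le]

theorem sq_div_add_le {x y X Y Z : ℝ} (hX : 0 < X) (hY : 0 < Y) (hZ : X + Y ≤ Z) :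
    (x + y) ^ 2 / Z ≤ x ^ 2 / X + y ^ 2 / Y := by
  calc (x + y) ^ 2 / Z ≤ (x + y) ^ 2 / (X + Y) := by gcongr
    _ ≤ _ := by
      rw [div_add_div _ _ hX.ne' hY.ne', div_le_div_iff₀ (by positivity) (by positivity)]
      nlinarith [sq_nonneg (x * Y - y * X)]

/-- quotient formula -/
theorem quot_formula {s : Finset ι} {k : ℕ} {a : ι → ℝ} (h : 0 < esf s (k + 1) a)
    (h' : ∀ i ∈ s, 0 < esf (s.erase i) k a) :
    ((k:ℝ) + 2) * (esf s (k + 2) a / esf s (k + 1) a) =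
      ∑ i ∈ s, (a i - a i ^ 2 / (a i + esf (s.erase i) (k + 1) a / esf (s.erase i) k a)) := by
  have h1 := esf_euler s a (k + 1)
  push_cast at h1
  have h2 : ((k:ℝ) + 2) * (esf s (k + 2) a / esf s (k + 1) a) =
     (∑ i ∈ s, a i * esf (s.erase i) (k + 1) a) / esf s (k + 1) a := by
    rw [h1]; ring
  rw [h2, Finset.sum_div]
  refine Finset.sum_congr rfl fun i hi => ?_
  have h3 := h' i hi
  have h4 := esf_erase hi a k
  have h5 : a i + esf (s.erase i) (k + 1) a / esf (s.erase i) k a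
      = esf s (k + 1) a / esf (s.erase i) k a := by
    rw [h4]; field_simp; ring
  rw [h5]
  have h6 : esf (s.erase i) (k + 1) a = esf s (k + 1) a - a i * esf (s.erase i) k a := by
    rw [h4]; ring
  rw [h6]
  field_simp

theorem superadd (k : ℕ) : ∀ (s : Finset ι) (a b : ι → ℝ), Gam s (k + 1) a → Gam s (k + 1) b →
    Gam s (k + 1) (a + b) ∧
    esf s (k + 1) a / esf s k a + esf s (k + 1) b / esf s k b
      ≤ esf s (k + 1) (a + b) / esf s k (a + b) := by
  induction k with
  | zero =>
    intro s a b ha hb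
    have h1 : ∀ c : ι → ℝ, esf s 1 c = ∑ i ∈ s, c i := by
      intro c; simp [esf, Finset.powersetCard_one]
    have h2 : esf s 1 (a + b) = esf s 1 a + esf s 1 b := by
      simp [h1, Finset.sum_add_distrib]
    have ha1 := ha 1 le_rfl
    have hb1 := hb 1 le_rfl
    refine ⟨?_, ?_⟩
    · intro j hj
      interval_cases j
      · rw [esf_zero]; exact one_pos
      · rw [h2]; linarith
    · simp only [zero_add, esf_zero, h2]; simp
  | succ k ih =>
    intro s a b ha hb
    have hab := (ih s a b (ha.mono (by omega)) (hb.mono (by omega))).1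
    have hi : ∀ i ∈ s, _ := fun i hi => ih (s.erase i) a b (ha.erase hi) (hb.erase hi)
    have key : esf s (k + 2) a / esf s (k + 1) a + esf s (k + 2) b / esf s (k + 1) b
      ≤ esf s (k + 2) (a + b) / esf s (k + 1) (a + b) := by
      have fa := quot_formula (ha (k + 1) (by omega)) (fun i hi => ha.erase hi k (by omega))
      have fb := quot_formula (hb (k + 1) (by omega)) (fun i hi => hb.erase hi k (by omega))
      have fab := quot_formula (hab (k + 1) (by omega)) (fun i h => (hi i h).1 k (by omega))
      have : ((k:ℝ) + 2) * (esf s (k + 2) a / esf s (k + 1) a)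
          + ((k:ℝ) + 2) * (esf s (k + 2) b / esf s (k + 1) b)
          ≤ ((k:ℝ) + 2) * (esf s (k + 2) (a + b) / esf s (k + 1) (a + b)) := by
        rw [fa, fb, fab, ← Finset.sum_add_distrib]
        refine Finset.sum_le_sum fun i his => ?_
        have hpos : ∀ c : ι → ℝ, Gam s (k + 2) c →
            0 < c i + esf (s.erase i) (k + 1) c / esf (s.erase i) k c := by
          intro c hc
          have h3 := hc.erase his k (by omega)
          have h4 := hc (k + 1) (by omega)
          rw [esf_erase his] at h4
          have : c i + esf (s.erase i) (k + 1) c / esf (s.erase i) k c =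
            (esf (s.erase i) (k + 1) c + c i * esf (s.erase i) k c) / esf (s.erase i) k c := by
            field_simp; ring
          rw [this]; positivity
        have hq := (hi i his).2
        have := sq_div_add_le (x := a i) (y := b i) (hpos a ha) (hpos b hb)
          (Z := (a + b) i + esf (s.erase i) (k + 1) (a + b) / esf (s.erase i) k (a + b))
          (by simp only [Pi.add_apply]; linarith)
        simp only [Pi.add_apply] at this ⊢
        linarith
      have hk : (0:ℝ) < (k:ℝ) + 2 := by positivity
      rw [← mul_add] at this
      exact le_of_mul_le_mul_left this hk
    refine ⟨?_, key⟩
    intro j hj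
    rcases Nat.lt_or_ge j (k + 2) with hj' | hj'
    · exact hab j (by omega)
    · obtain rfl : j = k + 2 := by omega
      have h1 := hab (k + 1) le_rfl
      have h2 : 0 < esf s (k + 2) a / esf s (k + 1) a :=
        div_pos (ha _ le_rfl) (ha _ (by omega))
      have h3 : 0 < esf s (k + 2) b / esf s (k + 1) b :=
        div_pos (hb _ le_rfl) (hb _ (by omega))
      have h4 : 0 < esf s (k + 2) (a + b) / esf s (k + 1) (a + b) := by linarith
      exact (div_pos_iff_of_pos_right h1).1 h4

theorem esf_smul (s : Finset ι) (j : ℕ) (c : ℝ) (a : ι → ℝ) :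
    esf s j (c • a) = c ^ j * esf s j a := by
  unfold esf
  rw [Finset.mul_sum]
  refine Finset.sum_congr rfl fun t ht => ?_
  simp only [Pi.smul_apply, smul_eq_mul, Finset.prod_mul_distrib, Finset.prod_const,
    (Finset.mem_powersetCard.1 ht).2]

theorem esf_prod {s : Finset ι} {k : ℕ} {a : ι → ℝ} (h : Gam s k a) :
    esf s k a = ∏ j ∈ Finset.range k, esf s (j + 1) a / esf s j a := by
  induction k with
  | zero => simp [esf_zero]
  | succ k ih =>
    rw [Finset.prod_range_succ, ← ih (h.mono (by omega))]
    have := h k (by omega)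
    field_simp

/-- the convex set of vectors -/
def CC (s : Finset ι) (k : ℕ) : Set (ι → ℝ) := {a | Gam s k a ∧ 1 ≤ esf s k a}

theorem Gam.smul {s : Finset ι} {k : ℕ} {a : ι → ℝ} (h : Gam s k a) {c : ℝ} (hc : 0 < c) :
    Gam s k (c • a) := by
  intro j hj
  rw [esf_smul]
  have := h j hj
  positivity

theorem Gam.add {s : Finset ι} {k : ℕ} {a b : ι → ℝ} (ha : Gam s k a) (hb : Gam s k b) :
    Gam s k (a + b) := by
  cases k with
  | zero => intro j hj; obtain rfl : j = 0 := by omega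
            rw [esf_zero]; exact one_pos
  | succ k => exact (superadd k s a b ha hb).1

theorem convex_CC (s : Finset ι) (k : ℕ) : Convex ℝ (CC s k) := by
  rw [convex_iff_forall_pos]
  rintro a ⟨ha, ha1⟩ b ⟨hb, hb1⟩ x y hx hy hxy
  have hG := (ha.smul hx).add (hb.smul hy)
  refine ⟨hG, ?_⟩
  rw [esf_prod hG]
  have hq : ∀ j ∈ Finset.range k,
      (esf s (j + 1) a / esf s j a) ^ x * (esf s (j + 1) b / esf s j b) ^ y ≤
      esf s (j + 1) (x • a + y • b) / esf s j (x • a + y • b) := by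
    intro j hj
    rw [Finset.mem_range] at hj
    have h1 := (superadd j s (x • a) (y • b) ((ha.smul hx).mono hj) ((hb.smul hy).mono hj)).2
    simp only [esf_smul] at h1
    have a0 := ha j (by omega)
    have a1 := ha (j + 1) (by omega)
    have b0 := hb j (by omega)
    have b1 := hb (j + 1) (by omega)
    have e1 : x ^ (j + 1) * esf s (j + 1) a / (x ^ j * esf s j a)
      = x * (esf s (j + 1) a / esf s j a) := by field_simp; ring
    have e2 : y ^ (j + 1) * esf s (j + 1) b / (y ^ j * esf s j b)
      = y * (esf s (j + 1) b / esf s j b) := by field_simp; ring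
    rw [e1, e2] at h1
    exact (Real.geom_mean_le_arith_mean2_weighted hx.le hy.le (by positivity) (by positivity)
      hxy).trans h1
  have ha' : ∀ j ∈ Finset.range k, 0 ≤ esf s (j + 1) a / esf s j a := by
    intro j hj; rw [Finset.mem_range] at hj
    exact (div_pos (ha _ (by omega)) (ha _ (by omega))).le
  have hb' : ∀ j ∈ Finset.range k, 0 ≤ esf s (j + 1) b / esf s j b := by
    intro j hj; rw [Finset.mem_range] at hj
    exact (div_pos (hb _ (by omega)) (hb _ (by omega))).le
  refine le_trans ?_ (Finset.prod_le_prod (fun j hj => ?_) hq)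
  · rw [Finset.prod_mul_distrib, Real.finsetProd_rpow _ _ ha', Real.finsetProd_rpow _ _ hb',
      ← esf_prod ha, ← esf_prod hb]
    exact one_le_mul_of_one_le_of_one_le (Real.one_le_rpow ha1 hx.le) (Real.one_le_rpow hb1 hy.le)
  · exact mul_nonneg (Real.rpow_nonneg (ha' j hj) _) (Real.rpow_nonneg (hb' j hj) _)

theorem CC_add_pos {s : Finset ι} {k : ℕ} (hk : 1 ≤ k) (hks : k ≤ s.card) {a p : ι → ℝ}
    (ha : a ∈ CC s k) (hp : ∀ i ∈ s, 0 < p i) : 1 < esf s k (a + p) := by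
  obtain ⟨ha, ha1⟩ := ha
  have hP : Gam s k p := by
    intro j hj
    unfold esf
    refine Finset.sum_pos (fun t ht => Finset.prod_pos fun i hi =>
      hp i ((Finset.mem_powersetCard.1 ht).1 hi)) (Finset.powersetCard_nonempty.2 (by omega))
  refine lt_of_le_of_lt ha1 ?_
  rw [esf_prod ha, esf_prod (ha.add hP)]
  refine Finset.prod_lt_prod_of_nonempty ?_ ?_ ⟨0, by simp; omega⟩
  · intro j hj; rw [Finset.mem_range] at hj
    exact div_pos (ha _ (by omega)) (ha _ (by omega))
  · intro j hj; rw [Finset.mem_range] at hj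
    have h1 := (superadd j s a p (ha.mono hj) (hP.mono hj)).2
    have : 0 < esf s (j + 1) p / esf s j p := div_pos (hP _ (by omega)) (hP _ (by omega))
    linarith

end VectorPart

section MatrixPart

theorem spectral_form {n : ℕ} {M : Matrix (Fin n) (Fin n) ℝ} (hM : M.IsSymm) :
    ∃ (V : Matrix (Fin n) (Fin n) ℝ) (a : Fin n → ℝ), V * V.transpose = 1 ∧ V.transpose * V = 1 ∧
      M = V * Matrix.diagonal a * V.transpose := by
  have hH : M.IsHermitian := by
    rw [Matrix.IsHermitian, Matrix.conjTranspose_eq_transpose_of_trivial]; exact hM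
  refine ⟨hH.eigenvectorUnitary, hH.eigenvalues, ?_, ?_, ?_⟩
  · have := Unitary.coe_mul_star_self hH.eigenvectorUnitary
    simpa [Matrix.star_eq_conjTranspose, Matrix.conjTranspose_eq_transpose_of_trivial] using this
  · have := Unitary.coe_star_mul_self hH.eigenvectorUnitary
    simpa [Matrix.star_eq_conjTranspose, Matrix.conjTranspose_eq_transpose_of_trivial] using this
  · have := hH.spectral_theorem
    rw [Unitary.conjStarAlgAut_apply] at this
    simpa [Matrix.star_eq_conjTranspose, Matrix.conjTranspose_eq_transpose_of_trivial,
      Function.comp_def] using this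

theorem esf_univ_coeff {n j : ℕ} (hj : j ≤ n) (a : Fin n → ℝ) :
    esf Finset.univ j a = (∏ i, (Polynomial.X + Polynomial.C (a i))).coeff (n - j) := by
  rw [Finset.prod_X_add_C_coeff _ _ (by simp)]
  have : (Finset.univ : Finset (Fin n)).card - (n - j) = j := by simp; omega
  rw [this]; rfl

theorem esf_perm {n j : ℕ} (hj : j ≤ n) (a : Fin n → ℝ) (σ : Equiv.Perm (Fin n)) :
    esf Finset.univ j (a ∘ σ) = esf Finset.univ j a := by
  rw [esf_univ_coeff hj, esf_univ_coeff hj]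
  congr 1
  exact Equiv.prod_comp σ (fun i => Polynomial.X + Polynomial.C (a i))

theorem matSk_conj {n j : ℕ} (hj : j ≤ n) {V : Matrix (Fin n) (Fin n) ℝ} (a : Fin n → ℝ)
    (hV : V.transpose * V = 1) :
    matSk n j (V * Matrix.diagonal a * V.transpose) = esf Finset.univ j a := by
  unfold matSk
  rw [Matrix.charpoly_mul_comm, ← mul_assoc, hV, one_mul, Matrix.charpoly_diagonal]
  have h := esf_univ_coeff hj ((-1 : ℝ) • a)
  have h2 : ∏ i, (Polynomial.X + Polynomial.C (((-1 : ℝ) • a) i))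
      = ∏ i, (Polynomial.X - Polynomial.C (a i)) := by
    refine Finset.prod_congr rfl fun i _ => ?_
    simp [sub_eq_add_neg]
  rw [h2, esf_smul] at h
  rw [← h, ← mul_assoc, ← mul_pow]; simp

theorem CC_stoch {n k : ℕ} (hk : k ≤ n) {a : Fin n → ℝ}
    (ha : a ∈ CC (Finset.univ : Finset (Fin n)) k)
    {S : Matrix (Fin n) (Fin n) ℝ} (hS : S ∈ doublyStochastic ℝ (Fin n)) :
    S.mulVec a ∈ CC (Finset.univ : Finset (Fin n)) k := by
  obtain ⟨w, hw0, hw1, rfl⟩ := exists_eq_sum_perm_of_mem_doublyStochastic hS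
  rw [Matrix.sum_mulVec]
  simp only [Matrix.smul_mulVec]
  refine (convex_CC _ k).sum_mem (fun σ _ => hw0 σ) hw1 fun σ _ => ?_
  have : (σ.permMatrix ℝ).mulVec a = a ∘ σ := by
    exact Matrix.permMatrix_mulVec _
  rw [this]
  refine ⟨fun j hj => ?_, ?_⟩
  · rw [esf_perm (hj.trans hk)]; exact ha.1 j hj
  · rw [esf_perm hk]; exact ha.2

theorem diag_mem {n k : ℕ} (hk : k ≤ n) {M V : Matrix (Fin n) (Fin n) ℝ}
    (hM : M.IsSymm) (h1 : ∀ j, 1 ≤ j → j ≤ k → 0 < matSk n j M) (h2 : matSk n k M = 1)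
    (hV : V * V.transpose = 1) (hV' : V.transpose * V = 1) :
    (fun i => (V.transpose * M * V) i i) ∈ CC (Finset.univ : Finset (Fin n)) k := by
  obtain ⟨U, a, hU, hU', rfl⟩ := spectral_form hM
  have ha : a ∈ CC (Finset.univ : Finset (Fin n)) k := by
    refine ⟨fun j hj => ?_, ?_⟩
    · rcases Nat.eq_zero_or_pos j with rfl | h
      · rw [esf_zero]; exact one_pos
      · rw [← matSk_conj (hj.trans hk) a hU']; exact h1 j h hj
    · rw [← matSk_conj hk a hU', h2]
  set W := V.transpose * U with hW
  have hWW : W * W.transpose = 1 := by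
    rw [hW, Matrix.transpose_mul, Matrix.transpose_transpose, mul_assoc, ← mul_assoc U, hU,
      one_mul, hV']
  have hWW' : W.transpose * W = 1 := by
    rw [hW, Matrix.transpose_mul, Matrix.transpose_transpose, mul_assoc, ← mul_assoc V, hV,
      one_mul, hU']
  have hS : (Matrix.of fun i j => W i j ^ 2) ∈ doublyStochastic ℝ (Fin n) := by
    rw [mem_doublyStochastic_iff_sum]
    refine ⟨fun i j => by simp; positivity, fun i => ?_, fun j => ?_⟩
    · have := congrFun (congrFun hWW i) i
      simp only [Matrix.mul_apply, Matrix.transpose_apply, Matrix.one_apply_eq] at this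
      simpa [sq] using this
    · have := congrFun (congrFun hWW' j) j
      simp only [Matrix.mul_apply, Matrix.transpose_apply, Matrix.one_apply_eq] at this
      simpa [sq] using this
  convert CC_stoch hk ha hS using 1
  funext i
  have e : V.transpose * (U * Matrix.diagonal a * U.transpose) * V
      = W * Matrix.diagonal a * W.transpose := by
    rw [hW, Matrix.transpose_mul, Matrix.transpose_transpose]; simp only [mul_assoc]
  rw [e, Matrix.mul_apply]
  simp only [Matrix.mul_diagonal, Matrix.transpose_apply, Matrix.mulVec, dotProduct, Matrix.of_apply]
  refine Finset.sum_congr rfl fun j _ => ?_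
  ring

theorem mat_main {n k : ℕ} (hk1 : 1 ≤ k) (hk : k ≤ n) {κ : Type*} (t : Finset κ) (w : κ → ℝ)
    (hw0 : ∀ l ∈ t, 0 ≤ w l) (hw1 : ∑ l ∈ t, w l = 1) (M : κ → Matrix (Fin n) (Fin n) ℝ)
    (hM : ∀ l ∈ t, (M l).IsSymm) (h1 : ∀ l ∈ t, ∀ j, 1 ≤ j → j ≤ k → 0 < matSk n j (M l))
    (h2 : ∀ l ∈ t, matSk n k (M l) = 1) (A P : Matrix (Fin n) (Fin n) ℝ) (hA : A.IsSymm)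
    (hP : ∀ x : Fin n → ℝ, x ≠ 0 → 0 < x ⬝ᵥ P.mulVec x)
    (hAP : A = ∑ l ∈ t, w l • M l + P) : 1 < matSk n k A := by
  obtain ⟨V, a, hV, hV', hAV⟩ := spectral_form hA
  rw [hAV, matSk_conj hk a hV']
  have hdiag : V.transpose * A * V = Matrix.diagonal a := by
    rw [hAV]
    calc V.transpose * (V * Matrix.diagonal a * V.transpose) * V
        = (V.transpose * V) * Matrix.diagonal a * (V.transpose * V) := by simp only [mul_assoc]
      _ = _ := by rw [hV', one_mul, mul_one]
  have ha : a = (∑ l ∈ t, w l • (fun i => (V.transpose * M l * V) i i))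
      + fun i => (V.transpose * P * V) i i := by
    funext i
    have : a i = (V.transpose * A * V) i i := by rw [hdiag]; simp
    rw [this, hAP, mul_add, add_mul, Matrix.add_apply, Pi.add_apply]
    congr 1
    rw [Finset.mul_sum, Finset.sum_mul, Matrix.sum_apply, Finset.sum_apply]
    refine Finset.sum_congr rfl fun l _ => ?_
    simp
  rw [ha]
  refine CC_add_pos hk1 (by simpa using hk) ?_ ?_
  · exact (convex_CC _ k).sum_mem hw0 hw1 fun l hl =>
      diag_mem hk (hM l hl) (h1 l hl) (h2 l hl) hV hV'
  · intro i _
    have hne : (fun j => V j i) ≠ 0 := by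
      intro h0
      have := congrFun (congrFun hV' i) i
      simp only [Matrix.mul_apply, Matrix.transpose_apply, Matrix.one_apply_eq] at this
      have h3 : ∀ j, V j i = 0 := fun j => congrFun h0 j
      simp [h3] at this
    have := hP _ hne
    convert this using 1
    rw [mul_assoc, Matrix.mul_apply]
    simp only [dotProduct, Matrix.transpose_apply, Matrix.mulVec, Matrix.mul_apply]

end MatrixPart

section AnalysisPart

theorem second_diff_one {g g' : ℝ → ℝ} {c : ℝ} (h1 : ∀ᶠ t in 𝓝 (0:ℝ), HasDerivAt g (g' t) t)
    (h2 : HasDerivAt g' c 0) :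
    Tendsto (fun t => (g t + g (-t) - 2 * g 0) / t ^ 2) (𝓝[>] (0:ℝ)) (𝓝 c) := by
  have hneg : Tendsto (fun t : ℝ => -t) (𝓝 0) (𝓝 0) := by
    simpa using (continuous_neg (G := ℝ)).tendsto 0
  have h1' := hneg.eventually h1
  have hc : ContinuousAt g 0 := h1.self_of_nhds.continuousAt
  refine HasDerivAt.lhopital_zero_nhdsGT (f' := fun t => g' t - g' (-t)) (g' := fun t => 2 * t)
    ?_ ?_ ?_ ?_ ?_ ?_
  · filter_upwards [nhdsWithin_le_nhds h1, nhdsWithin_le_nhds h1'] with t ht ht'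
    have h3 : HasDerivAt (fun t => g (-t)) (g' (-t) * (-1)) t :=
      HasDerivAt.comp t ht' (hasDerivAt_neg t)
    have := (ht.add h3).sub_const (2 * g 0)
    have e : g' t - g' (-t) = g' t + g' (-t) * (-1) := by ring
    rw [e]
    exact this
  · refine Eventually.of_forall fun t => ?_
    simpa using hasDerivAt_pow 2 t
  · filter_upwards [self_mem_nhdsWithin] with t ht
    have : (0:ℝ) < t := ht
    positivity
  · have h3 : Tendsto (fun t => g t + g (-t) - 2 * g 0) (𝓝 0) (𝓝 (g 0 + g 0 - 2 * g 0)) := by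
      refine Tendsto.sub_const (Tendsto.add hc ?_) _
      exact Tendsto.comp hc hneg
    have e : g 0 + g 0 - 2 * g 0 = 0 := by ring
    rw [e] at h3
    exact h3.mono_left nhdsWithin_le_nhds
  · have : Tendsto (fun t : ℝ => t ^ 2) (𝓝 0) (𝓝 (0 ^ 2)) := (continuous_pow 2).tendsto 0
    simp only [ne_eq, OfNat.ofNat_ne_zero, not_false_eq_true, zero_pow] at this
    exact this.mono_left nhdsWithin_le_nhds
  · have h3 : HasDerivAt (fun t => g' (-t)) (c * (-1)) 0 := by
      refine HasDerivAt.comp (h₂ := g') (h := fun t : ℝ => -t) 0 ?_ (hasDerivAt_neg 0)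
      simpa using h2
    have h4 := (h2.sub h3)
    rw [hasDerivAt_iff_tendsto_slope_zero] at h4
    have h5 := (h4.mono_left (nhdsWithin_mono 0 (s := Set.Ioi 0)
      (fun t (ht : 0 < t) => ht.ne'))).const_mul (1/2)
    have e : 1 / 2 * (c - c * -1) = c := by ring
    rw [e] at h5
    refine h5.congr' ?_
    filter_upwards [self_mem_nhdsWithin] with t ht
    have : (0:ℝ) < t := ht
    simp
    field_simp

variable {E : Type*} [NormedAddCommGroup E] [NormedSpace ℝ E]

/-- directional derivative -/
noncomputable def dd (v : E) (f : E → ℝ) : E → ℝ := fun x => fderiv ℝ f x v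

theorem dd_contDiffOn {Ω : Set E} (hΩ : IsOpen Ω) {f : E → ℝ} {m k : WithTop ℕ∞}
    (hf : ContDiffOn ℝ k f Ω) (hmk : m + 1 ≤ k) (v : E) : ContDiffOn ℝ m (dd v f) Ω :=
  (hf.fderiv_of_isOpen hΩ hmk).clm_apply contDiffOn_const

theorem dd_congr {Ω : Set E} (hΩ : IsOpen Ω) {f g : E → ℝ} (h : ∀ x ∈ Ω, f x = g x) (v : E) :
    ∀ x ∈ Ω, dd v f x = dd v g x := by
  intro x hx
  have : f =ᶠ[𝓝 x] g := by
    filter_upwards [hΩ.mem_nhds hx] with y hy using h y hy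
  unfold dd
  rw [this.fderiv_eq]

theorem dd_dd {Ω : Set E} (hΩ : IsOpen Ω) {f : E → ℝ} (hf : ContDiffOn ℝ 2 f Ω) {x : E}
    (hx : x ∈ Ω) (v w : E) : dd v (dd w f) x = fderiv ℝ (fderiv ℝ f) x v w := by
  have h1 : DifferentiableAt ℝ (fderiv ℝ f) x :=
    ((hf.fderiv_of_isOpen hΩ (m := 1) (by norm_num)).contDiffAt (hΩ.mem_nhds hx)).differentiableAt
      (by norm_num)
  unfold dd
  rw [fderiv_clm_apply h1 (differentiableAt_const w)]
  simp

theorem dd_comm {Ω : Set E} (hΩ : IsOpen Ω) {f : E → ℝ} (hf : ContDiffOn ℝ 2 f Ω) (v w : E) :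
    ∀ x ∈ Ω, dd v (dd w f) x = dd w (dd v f) x := by
  intro x hx
  rw [dd_dd hΩ hf hx, dd_dd hΩ hf hx]
  exact ((hf.contDiffAt (hΩ.mem_nhds hx)).isSymmSndFDerivAt (by simp)).eq v w

theorem dd_comm3 {Ω : Set E} (hΩ : IsOpen Ω) {f : E → ℝ} (hf : ContDiffOn ℝ 3 f Ω) (l v w : E) :
    ∀ x ∈ Ω, dd l (dd v (dd w f)) x = dd v (dd w (dd l f)) x := by
  intro x hx
  rw [dd_comm hΩ (dd_contDiffOn hΩ hf (by norm_num) w) l v x hx]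
  exact dd_congr hΩ (dd_comm hΩ (hf.of_le (by norm_num)) l w) v x hx

theorem dd_comm4 {Ω : Set E} (hΩ : IsOpen Ω) {f : E → ℝ} (hf : ContDiffOn ℝ 4 f Ω) (l v w : E) :
    ∀ x ∈ Ω, dd l (dd l (dd v (dd w f))) x = dd v (dd w (dd l (dd l f))) x := by
  intro x hx
  rw [dd_congr hΩ (dd_comm3 hΩ (hf.of_le (by norm_num)) l v w) l x hx]
  exact dd_comm3 hΩ (dd_contDiffOn hΩ hf (by norm_num) l) l v w x hx

theorem second_diff {Ω : Set E} (hΩ : IsOpen Ω) {f : E → ℝ} (hf : ContDiffOn ℝ 2 f Ω) {x : E}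
    (hx : x ∈ Ω) (v : E) :
    Tendsto (fun t : ℝ => (f (x + t • v) + f (x - t • v) - 2 * f x) / t ^ 2) (𝓝[>] (0:ℝ))
      (𝓝 (dd v (dd v f) x)) := by
  have hline : ∀ t : ℝ, HasDerivAt (fun t : ℝ => x + t • v) v t := by
    intro t
    simpa using ((hasDerivAt_id t).smul_const v).const_add x
  have hcont : Tendsto (fun t : ℝ => x + t • v) (𝓝 0) (𝓝 x) := by
    have := (hline 0).continuousAt.tendsto
    simpa using this
  have hmem : ∀ᶠ t in 𝓝 (0:ℝ), x + t • v ∈ Ω := hcont.eventually (hΩ.mem_nhds hx)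
  have hg : ∀ f : E → ℝ, ContDiffOn ℝ 1 f Ω → ∀ t : ℝ, x + t • v ∈ Ω →
      HasDerivAt (fun t : ℝ => f (x + t • v)) (dd v f (x + t • v)) t := by
    intro f hf t ht
    have h1 : DifferentiableAt ℝ f (x + t • v) :=
      (hf.contDiffAt (hΩ.mem_nhds ht)).differentiableAt (by norm_num)
    exact h1.hasFDerivAt.comp_hasDerivAt t (hline t)
  have := second_diff_one (g := fun t : ℝ => f (x + t • v))
    (g' := fun t : ℝ => dd v f (x + t • v)) (c := dd v (dd v f) x)
    (hmem.mono fun t ht => hg f (hf.of_le (by norm_num)) t ht)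
    (by
      have := hg (dd v f) (dd_contDiffOn hΩ hf (by norm_num) v) 0 (by simpa using hx)
      simpa using this)
  simpa [sub_eq_add_neg] using this

end AnalysisPart

section Final

theorem hess_entry {n : ℕ} {Ω : Set (Euc n)} (hΩ : IsOpen Ω) {u : Euc n → ℝ}
    (hu : ContDiffOn ℝ 2 u Ω) {x : Euc n} (hx : x ∈ Ω) (i j : Fin n) :
    hessMat n u x i j = dd (ebasis n i) (dd (ebasis n j) u) x := by
  rw [dd_dd hΩ hu hx]
  simp [hessMat, iteratedFDeriv_two_apply]

theorem quad_bound {n : ℕ} (T C : Fin n → Fin n → ℝ) (ε : ℝ) (hn : 1 ≤ n) (hε : 0 < ε)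
    (hT : ∀ i j, |T i j - C i j| < ε / n) (ξ : Fin n → ℝ) (hξ : ξ ≠ 0)
    (hC : ∑ i, ∑ j, ξ i * ξ j * C i j ≤ -(2 * ε * ∑ i, ξ i ^ 2)) :
    ∑ i, ∑ j, ξ i * ξ j * T i j < 0 := by
  have hn' : (0:ℝ) < n := by exact_mod_cast hn
  have hpos : 0 < ∑ i, ξ i ^ 2 := by
    obtain ⟨i, hi⟩ := Function.ne_iff.1 hξ
    refine Finset.sum_pos' (fun _ _ => sq_nonneg _) ⟨i, Finset.mem_univ _, ?_⟩
    have : ξ i ≠ 0 := hi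
    positivity
  have h1 : ∑ i, ∑ j, ξ i * ξ j * T i j ≤
      ∑ i, ∑ j, (ξ i * ξ j * C i j + ε / n * (|ξ i| * |ξ j|)) := by
    refine Finset.sum_le_sum fun i _ => Finset.sum_le_sum fun j _ => ?_
    have h2 : ξ i * ξ j * (T i j - C i j) ≤ |ξ i| * |ξ j| * (ε / n) := by
      calc _ ≤ |ξ i * ξ j * (T i j - C i j)| := le_abs_self _
        _ = |ξ i| * |ξ j| * |T i j - C i j| := by rw [abs_mul, abs_mul]
        _ ≤ _ := by gcongr; exact (hT i j).le
    linarith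
  have h3 : ∑ i, ∑ j, (ξ i * ξ j * C i j + ε / n * (|ξ i| * |ξ j|)) =
      ∑ i, ∑ j, ξ i * ξ j * C i j + ε / n * (∑ i, |ξ i|) ^ 2 := by
    simp only [Finset.sum_add_distrib, ← Finset.mul_sum]
    rw [← Finset.sum_mul]; ring
  have h4 : (∑ i, |ξ i|) ^ 2 ≤ n * ∑ i, ξ i ^ 2 := by
    have := sq_sum_le_card_mul_sum_sq (s := Finset.univ) (f := fun i => |ξ i|)
    simpa using this
  have h5 : ε / n * (∑ i, |ξ i|) ^ 2 ≤ ε * ∑ i, ξ i ^ 2 := by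
    calc _ ≤ ε / n * (n * ∑ i, ξ i ^ 2) := by gcongr
      _ = _ := by field_simp
  nlinarith [mul_pos hε hpos]

theorem no_interior_max {n k : ℕ} (hk1 : 1 ≤ k) (hkn : k ≤ n) {Ω : Set (Euc n)} (hΩ : IsOpen Ω)
    {u : Euc n → ℝ} (hu4 : ContDiffOn ℝ 4 u Ω) (hconv : KConvexOn n k u Ω)
    (heq : ∀ x ∈ Ω, SkHess n k u x = 1) {ε : ℝ} (hε : 0 < ε) {x : Euc n} (hx : x ∈ Ω)
    (hmax : IsLocalMax (fun y => lapl n u y + ε * ‖y‖ ^ 2) x) : False := by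
  have hu2 : ContDiffOn ℝ 2 u Ω := hu4.of_le (by norm_num)
  have hn : 1 ≤ n := hk1.trans hkn
  have hn' : (0:ℝ) < n := by exact_mod_cast hn
  let e := ebasis n
  have hF : ∀ i j, ContDiffOn ℝ 2 (dd (e i) (dd (e j) u)) Ω := fun i j =>
    dd_contDiffOn hΩ (dd_contDiffOn hΩ hu4 (m := 3) (by norm_num) _) (by norm_num) _
  let L : Euc n → ℝ := fun y => ∑ l, dd (e l) (dd (e l) u) y
  have hL : ContDiffOn ℝ 2 L Ω := ContDiffOn.sum fun l _ => hF l l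
  have hlap : ∀ y ∈ Ω, lapl n u y = L y := fun y hy =>
    Finset.sum_congr rfl fun l _ => hess_entry hΩ hu2 hy l l
  let C : Fin n → Fin n → ℝ := fun i j => ∑ l, dd (e l) (dd (e l) (dd (e i) (dd (e j) u))) x
  have hddsum : ∀ (f : Fin n → Euc n → ℝ), (∀ l, ContDiffOn ℝ 1 (f l) Ω) → ∀ (v : Euc n),
      ∀ y ∈ Ω, dd v (fun z => ∑ l, f l z) y = ∑ l, dd v (f l) y := by
    intro f hf v y hy
    unfold dd
    rw [fderiv_fun_sum fun l _ => ((hf l).contDiffAt (hΩ.mem_nhds hy)).differentiableAt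
      (by norm_num)]
    simp
  have hCL : ∀ i j, C i j = dd (e i) (dd (e j) L) x := by
    intro i j
    have h1 := hddsum (fun l => dd (e l) (dd (e l) u)) (fun l => (hF l l).of_le (by norm_num)) (e j)
    rw [dd_congr hΩ h1 (e i) x hx,
      hddsum _ (fun l => dd_contDiffOn hΩ (hF l l) (by norm_num) _) (e i) x hx]
    exact Finset.sum_congr rfl fun l _ => dd_comm4 hΩ hu4 _ _ _ x hx
  have hline : ∀ v : Euc n, ∀ s : Set (Euc n), s ∈ 𝓝 x → ∀ᶠ t in 𝓝[>] (0:ℝ),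
      x + t • v ∈ s ∧ x - t • v ∈ s := by
    intro v s hs
    have h1 : Tendsto (fun t : ℝ => x + t • v) (𝓝 0) (𝓝 x) := by
      have : Continuous fun t : ℝ => x + t • v := by fun_prop
      simpa using this.tendsto 0
    have h2 : Tendsto (fun t : ℝ => x - t • v) (𝓝 0) (𝓝 x) := by
      have : Continuous fun t : ℝ => x - t • v := by fun_prop
      simpa using this.tendsto 0
    exact nhdsWithin_le_nhds ((h1.eventually hs).and (h2.eventually hs))
  -- second order condition
  have hsec : ∀ v : Euc n, dd v (dd v L) x ≤ -(2 * ε * ‖v‖ ^ 2) := by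
    intro v
    refine le_of_tendsto (second_diff hΩ hL hx v) ?_
    filter_upwards [hline v _ (hΩ.mem_nhds hx), hline v _ hmax, self_mem_nhdsWithin]
      with t ⟨h1, h2⟩ ⟨h3, h4⟩ ht
    have ht : 0 < t := ht
    replace h3 : lapl n u (x + t • v) + ε * ‖x + t • v‖ ^ 2 ≤ lapl n u x + ε * ‖x‖ ^ 2 := h3
    replace h4 : lapl n u (x - t • v) + ε * ‖x - t • v‖ ^ 2 ≤ lapl n u x + ε * ‖x‖ ^ 2 := h4
    rw [hlap _ h1, hlap _ hx] at h3
    rw [hlap _ h2, hlap _ hx] at h4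
    have hp := parallelogram_law_with_norm ℝ x (t • v)
    rw [norm_smul, Real.norm_of_nonneg ht.le] at hp
    rw [div_le_iff₀ (by positivity)]
    have h5 : ε * (‖x + t • v‖ ^ 2 + ‖x - t • v‖ ^ 2) = ε * (2 * ‖x‖ ^ 2 + 2 * t ^ 2 * ‖v‖ ^ 2) := by
      congr 1; linarith
    linarith
  have hC : ∀ ξ : Fin n → ℝ, ∑ i, ∑ j, ξ i * ξ j * C i j ≤ -(2 * ε * ∑ i, ξ i ^ 2) := by
    intro ξ
    have h1 := hsec (WithLp.toLp 2 ξ)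
    have h2 : (WithLp.toLp 2 ξ : Euc n) = ∑ i, ξ i • e i := by
      ext j
      simp [e, ebasis, Finset.sum_apply, Pi.single_apply]
    have h3 : ‖(WithLp.toLp 2 ξ : Euc n)‖ ^ 2 = ∑ i, ξ i ^ 2 := by
      rw [EuclideanSpace.norm_sq_eq]; simp
    rw [h3] at h1
    refine le_trans (le_of_eq ?_) h1
    rw [dd_dd hΩ hL hx, h2]
    simp only [map_sum, map_smul, sum_apply, smul_apply,
      smul_eq_mul, Finset.mul_sum]
    rw [Finset.sum_comm]
    refine Finset.sum_congr rfl fun i _ => ?_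
    refine Finset.sum_congr rfl fun j _ => ?_
    rw [hCL, dd_dd hΩ hL hx]
    ring
  -- difference quotients
  let T : ℝ → Fin n → Fin n → ℝ := fun t i j =>
    ∑ l, (dd (e i) (dd (e j) u) (x + t • e l) + dd (e i) (dd (e j) u) (x - t • e l)
      - 2 * dd (e i) (dd (e j) u) x) / t ^ 2
  have hT : ∀ i j, Tendsto (fun t => T t i j) (𝓝[>] (0:ℝ)) (𝓝 (C i j)) := fun i j =>
    tendsto_finsetSum _ fun l _ => second_diff hΩ (hF i j) hx (e l)
  have hev1 : ∀ᶠ t in 𝓝[>] (0:ℝ), ∀ i j, |T t i j - C i j| < ε / n := by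
    rw [eventually_all]; intro i
    rw [eventually_all]; intro j
    have := (Metric.tendsto_nhds.1 (hT i j)) (ε / n) (by positivity)
    simpa [Real.dist_eq] using this
  have hev2 : ∀ᶠ t in 𝓝[>] (0:ℝ), ∀ l, x + t • e l ∈ Ω ∧ x - t • e l ∈ Ω := by
    rw [eventually_all]; intro l
    exact hline _ _ (hΩ.mem_nhds hx)
  obtain ⟨t, ht1, ht2, ht⟩ := (hev1.and (hev2.and self_mem_nhdsWithin)).exists
  have ht : 0 < t := ht
  let pt : Fin n × Bool → Euc n := fun l => if l.2 then x + t • e l.1 else x - t • e l.1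
  have hpt : ∀ l, pt l ∈ Ω := by
    rintro ⟨l, b⟩
    cases b
    · exact (ht2 l).2
    · exact (ht2 l).1
  have hsymm : ∀ y ∈ Ω, (hessMat n u y).IsSymm := by
    intro y hy
    ext i j
    rw [Matrix.transpose_apply, hess_entry hΩ hu2 hy, hess_entry hΩ hu2 hy,
      dd_comm hΩ hu2 _ _ y hy]
  have := mat_main hk1 hkn Finset.univ (fun _ : Fin n × Bool => 1 / (2 * (n:ℝ)))
    (fun _ _ => by positivity) (by simp; field_simp) (fun l => hessMat n u (pt l))
    (fun l _ => hsymm _ (hpt l)) (fun l _ => hconv _ (hpt l)) (fun l _ => heq _ (hpt l))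
    (hessMat n u x) (Matrix.of fun i j => -(t ^ 2 / (2 * n)) * T t i j) (hsymm x hx) ?_ ?_
  · have h1 : matSk n k (hessMat n u x) = 1 := heq x hx
    linarith
  · intro ξ hξ
    have h1 := quad_bound (T t) C ε hn hε ht1 ξ hξ (hC ξ)
    have h2 : ξ ⬝ᵥ (Matrix.of fun i j => -(t ^ 2 / (2 * n)) * T t i j).mulVec ξ
        = -(t ^ 2 / (2 * n)) * ∑ i, ∑ j, ξ i * ξ j * T t i j := by
      simp only [dotProduct, Matrix.mulVec, Matrix.of_apply, Finset.mul_sum]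
      refine Finset.sum_congr rfl fun i _ => Finset.sum_congr rfl fun j _ => ?_
      ring
    rw [h2]
    have h3 : 0 < t ^ 2 / (2 * (n:ℝ)) := by positivity
    nlinarith
  · ext i j
    rw [Matrix.add_apply, Matrix.sum_apply, Fintype.sum_prod_type]
    simp only [Fintype.sum_bool, Matrix.smul_apply, smul_eq_mul, Matrix.of_apply, T, pt,
      hess_entry hΩ hu2 hx, if_true]
    have h1 : ∀ l, hessMat n u (x + t • e l) i j = dd (e i) (dd (e j) u) (x + t • e l) :=
      fun l => hess_entry hΩ hu2 (ht2 l).1 i j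
    have h2 : ∀ l, hessMat n u (x - t • e l) i j = dd (e i) (dd (e j) u) (x - t • e l) :=
      fun l => hess_entry hΩ hu2 (ht2 l).2 i j
    simp only [h1, h2, Bool.false_eq_true, if_false]
    rw [Finset.mul_sum, ← Finset.sum_add_distrib]
    have h3 : ∀ l ∈ (Finset.univ : Finset (Fin n)),
        1 / (2 * (n:ℝ)) * dd (e i) (dd (e j) u) (x + t • e l) +
        1 / (2 * (n:ℝ)) * dd (e i) (dd (e j) u) (x - t • e l) +
        -(t ^ 2 / (2 * n)) * ((dd (e i) (dd (e j) u) (x + t • e l) +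
          dd (e i) (dd (e j) u) (x - t • e l) - 2 * dd (e i) (dd (e j) u) x) / t ^ 2)
        = dd (e i) (dd (e j) u) x / n := by
      intro l _
      field_simp
      ring
    rw [Finset.sum_congr rfl h3]
    simp
    field_simp
    rfl

end Final


/-- maximum principle for the Laplacian, cf. Lemma 2.7: for a `k`-convex
solution of `S_k(D²u) = 1` in a bounded domain `Ω` of class `C⁴(Ω) ∩ C²(Ω̄)`, the supremum
of `Δu` over `Ω̄` is attained on `∂Ω`. -/
theorem statement9 (n k : ℕ) (hk1 : 1 ≤ k) (hkn : k ≤ n)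
    (Ω : Set (Euc n)) (hopen : IsOpen Ω) (hbd : Bornology.IsBounded Ω)
    (hconn : IsConnected Ω)
    (u : Euc n → ℝ)
    (hu4 : ContDiffOn ℝ 4 u Ω)
    (hu2 : ∃ U : Set (Euc n), IsOpen U ∧ closure Ω ⊆ U ∧ ContDiffOn ℝ 2 u U)
    (hconv : KConvexOn n k u Ω)
    (heq : ∀ x ∈ Ω, SkHess n k u x = 1) :
    sSup ((fun x => lapl n u x) '' closure Ω) =
      sSup ((fun x => lapl n u x) '' frontier Ω) := by
  obtain ⟨U, hU, hΩU, huU⟩ := hu2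
  have hcomp : IsCompact (closure Ω) := hbd.isCompact_closure
  have hcont : ContinuousOn (fun x => lapl n u x) (closure Ω) := by
    have h1 : ContinuousOn (fun x => ∑ i, dd (ebasis n i) (dd (ebasis n i) u) x) U :=
      continuousOn_finsetSum _ fun i _ =>
        (dd_contDiffOn hU (dd_contDiffOn hU huU (m := 1) (by norm_num) _) (m := 0)
          (by norm_num) _).continuousOn
    refine (h1.mono hΩU).congr fun x hx => ?_
    exact Finset.sum_congr rfl fun l _ => hess_entry hU huU (hΩU hx) l l
  have hne : (closure Ω).Nonempty := hconn.nonempty.closure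
  have hbdd : BddAbove ((fun x => lapl n u x) '' closure Ω) := hcomp.bddAbove_image hcont
  have hsub : frontier Ω ⊆ closure Ω := frontier_subset_closure
  have hbddf : BddAbove ((fun x => lapl n u x) '' frontier Ω) :=
    hbdd.mono (Set.image_mono hsub)
  obtain ⟨R, hR⟩ := (hcomp.image continuous_norm).bddAbove
  have hR' : ∀ x ∈ closure Ω, ‖x‖ ≤ R := fun x hx => hR ⟨x, hx, rfl⟩
  have key : ∀ ε : ℝ, 0 < ε → ∃ x₀ ∈ frontier Ω, ∀ x ∈ closure Ω,
      lapl n u x ≤ lapl n u x₀ + ε * R ^ 2 := by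
    intro ε hε
    have hc2 : ContinuousOn (fun x => lapl n u x + ε * ‖x‖ ^ 2) (closure Ω) :=
      hcont.add (by fun_prop)
    obtain ⟨x₀, hx₀, hm⟩ := hcomp.exists_isMaxOn hne hc2
    have hnot : x₀ ∉ Ω := by
      intro hx
      refine no_interior_max hk1 hkn hopen hu4 hconv heq hε hx ?_
      filter_upwards [hopen.mem_nhds hx] with y hy
      exact hm (subset_closure hy)
    refine ⟨x₀, by rw [hopen.frontier_eq]; exact ⟨hx₀, hnot⟩, fun x hx => ?_⟩
    have h1 : lapl n u x + ε * ‖x‖ ^ 2 ≤ lapl n u x₀ + ε * ‖x₀‖ ^ 2 := hm hx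
    have h2 : ε * ‖x₀‖ ^ 2 ≤ ε * R ^ 2 := by
      have := hR' x₀ hx₀
      gcongr
    have h3 : 0 ≤ ε * ‖x‖ ^ 2 := by positivity
    linarith
  apply le_antisymm
  · refine csSup_le (hne.image _) ?_
    rintro _ ⟨x, hx, rfl⟩
    refine le_of_forall_pos_le_add fun δ hδ => ?_
    obtain ⟨x₀, hx₀, h⟩ := key (δ / (R ^ 2 + 1)) (by positivity)
    have h1 := h x hx
    have h2 : lapl n u x₀ ≤ sSup ((fun x => lapl n u x) '' frontier Ω) :=
      le_csSup hbddf ⟨x₀, hx₀, rfl⟩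
    have h3 : δ / (R ^ 2 + 1) * R ^ 2 ≤ δ := by
      rw [div_mul_eq_mul_div, div_le_iff₀ (by positivity)]
      nlinarith
    show lapl n u x ≤ _
    linarith
  · obtain ⟨x₀, hx₀, _⟩ := key 1 one_pos
    exact csSup_le_csSup hbdd (Set.Nonempty.image _ ⟨x₀, hx₀⟩) (Set.image_mono hsub)
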